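/- Let 1 < p < ∞, let ω be a radial weight on the unit disc with ∫₀¹ω = 1, define ω̂(r) = ∫_r¹ ω(s)ds, and define r_n by ω̂(r_n) = 2^{−n} and M_n = ⌊1/(1−r_n)⌋. Then Σ_{j=0}^∞ 2^{−j} / ( (ω_{2M_j+1})^{p'} M_{j+1} ) = ∞ if and only if ∫₀¹ ω̂(t)^{1−p'} dt = ∞, where ω_{m} = ∫₀¹ r^m ω(r) dr and p' = p/(p−1), provided ω is doubling (ω̂(r) ≤ C ω̂((1+r)/2)). -/

import Mathlib

open MeasureTheory Real

namespace Aux16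

theorem moment_le (ω : ℝ → ℝ) (hω0 : ∀ r ∈ Set.Ico (0:ℝ) 1, 0 ≤ ω r)
    (hint : IntervalIntegrable ω MeasureTheory.volume 0 1)
    (a b : ℝ) (ha : 0 ≤ a) (hab : a ≤ b) (hb : b ≤ 1) (m : ℕ) :
    a ^ m * (∫ s in a..b, ω s) ≤ (∫ s in a..b, s ^ m * ω s) ∧
    (∫ s in a..b, s ^ m * ω s) ≤ b ^ m * (∫ s in a..b, ω s) ∧
    0 ≤ (∫ s in a..b, ω s) ∧ IntervalIntegrable ω MeasureTheory.volume a b ∧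
    IntervalIntegrable (fun s => s ^ m * ω s) MeasureTheory.volume a b := by
  have hi : IntervalIntegrable ω MeasureTheory.volume a b := by
    apply hint.mono_set
    rw [Set.uIcc_of_le hab, Set.uIcc_of_le zero_le_one]
    exact Set.Icc_subset_Icc ha hb
  have hi2 : IntervalIntegrable (fun s => s ^ m * ω s) MeasureTheory.volume a b :=
    hi.continuousOn_mul (by fun_prop)
  refine ⟨?_, ?_, ?_, hi, hi2⟩
  · rw [← intervalIntegral.integral_const_mul]
    apply intervalIntegral.integral_mono_on_of_le_Ioo hab (hi.const_mul _) hi2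
    intro x hx
    have := hω0 x ⟨by linarith [hx.1], by linarith [hx.2]⟩
    have := hx.1.le
    gcongr
  · rw [← intervalIntegral.integral_const_mul]
    apply intervalIntegral.integral_mono_on_of_le_Ioo hab hi2 (hi.const_mul _)
    intro x hx
    have := hω0 x ⟨by linarith [hx.1], by linarith [hx.2]⟩
    have h1 := hx.2.le
    have h2 : 0 ≤ x := by linarith [hx.1]
    gcongr
  · have : (∫ s in a..b, (0:ℝ)) ≤ ∫ s in a..b, ω s := by
      apply intervalIntegral.integral_mono_on_of_le_Ioo hab (by simp) hi
      intro x hx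
      exact hω0 x ⟨by linarith [hx.1], by linarith [hx.2]⟩
    simpa using this

theorem W_anti (ω : ℝ → ℝ) (hω0 : ∀ r ∈ Set.Ico (0:ℝ) 1, 0 ≤ ω r)
    (hint : IntervalIntegrable ω MeasureTheory.volume 0 1)
    (a b : ℝ) (ha : 0 ≤ a) (hab : a ≤ b) (hb : b ≤ 1) :
    (∫ s in b..1, ω s) ≤ ∫ s in a..1, ω s := by
  obtain ⟨-, -, h, hi, -⟩ := moment_le ω hω0 hint a b ha hab hb 0
  obtain ⟨-, -, -, hi', -⟩ := moment_le ω hω0 hint b 1 (ha.trans hab) hb le_rfl 0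
  rw [← intervalIntegral.integral_add_adjacent_intervals hi hi']
  linarith

theorem moment_lower (ω : ℝ → ℝ) (hω0 : ∀ r ∈ Set.Ico (0:ℝ) 1, 0 ≤ ω r)
    (hint : IntervalIntegrable ω MeasureTheory.volume 0 1)
    (Cd : ℝ) (hC : 0 < Cd) (hdoub : ∀ r ∈ Set.Ico (0:ℝ) 1,
      (∫ s in r..1, ω s) ≤ Cd * ∫ s in ((1 + r) / 2)..1, ω s)
    (r : ℝ) (hr : r ∈ Set.Ico (0:ℝ) 1) (M : ℕ) (hM : (M:ℝ) * (1 - r) ≤ 1) :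
    (∫ s in r..1, ω s) / (8 * Cd) ≤ ∫ s in (0:ℝ)..1, s ^ (2 * M + 1) * ω s := by
  obtain ⟨h0, h1⟩ := hr
  set ρ := (1 + r) / 2 with hρ
  have e1 : ρ ≤ 1 := by linarith
  have e0 : 1/2 ≤ ρ := by linarith
  obtain ⟨h, -, hn, -, hi⟩ := moment_le ω hω0 hint ρ 1 (by linarith) e1 le_rfl (2*M+1)
  obtain ⟨h', -, hn', -, hi'⟩ := moment_le ω hω0 hint 0 ρ le_rfl (by linarith) e1 (2*M+1)
  rw [← intervalIntegral.integral_add_adjacent_intervals hi' hi]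
  have hb : 1/2 ≤ ρ ^ M := by
    have := one_add_mul_le_pow (a := ρ - 1) (by linarith) M
    have e : 1 + (ρ - 1) = ρ := by ring
    rw [e] at this
    have : (M:ℝ) * (ρ - 1) = - ((M:ℝ) * (1 - r)) / 2 := by rw [hρ]; ring
    linarith
  have hp : 1/8 ≤ ρ ^ (2 * M + 1) := by
    have e : ρ ^ (2 * M + 1) = ρ ^ M * ρ ^ M * ρ := by ring
    rw [e]
    calc (1/8:ℝ) = 1/2 * (1/2) * (1/2) := by norm_num
      _ ≤ _ := by gcongr
  have hz : (0:ℝ) ^ (2*M+1) * (∫ s in (0:ℝ)..ρ, ω s) = 0 := by simp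
  have hd := hdoub r ⟨h0, h1⟩
  have h3 : (∫ s in r..1, ω s) / (8 * Cd) ≤ 1/8 * ∫ s in ρ..1, ω s := by
    rw [div_le_iff₀ (by positivity)]
    linarith
  have h4 := mul_le_mul_of_nonneg_right hp hn
  linarith

theorem moment_upper (ω : ℝ → ℝ) (hω0 : ∀ r ∈ Set.Ico (0:ℝ) 1, 0 ≤ ω r)
    (hint : IntervalIntegrable ω MeasureTheory.volume 0 1)
    (Cd : ℝ) (hC : 1 ≤ Cd) (hdoub : ∀ r ∈ Set.Ico (0:ℝ) 1,
      (∫ s in r..1, ω s) ≤ Cd * ∫ s in ((1 + r) / 2)..1, ω s)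
    (N : ℕ) (hN : Cd ≤ 2 ^ N)
    (r : ℝ) (hr : r ∈ Set.Ico (0:ℝ) 1) (m : ℕ) (hm : 1 ≤ (m:ℝ) * (1 - r)) :
    (∫ s in (0:ℝ)..1, s ^ m * ω s) ≤
      (1 + 2 * (Cd * (N+1).factorial)) * ∫ s in r..1, ω s := by
  obtain ⟨h0, h1⟩ := hr
  set x := 1 - r with hx
  have hx0 : 0 < x := by linarith
  set D : ℝ := Cd * (N+1).factorial with hD
  have hD0 : 0 ≤ D := by positivity
  set ρ : ℕ → ℝ := fun k => max 0 (1 - 2 ^ k * x) with hρ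
  have ρ0 : ∀ k, 0 ≤ ρ k := fun k => le_max_left _ _
  have ρ1 : ∀ k, ρ k < 1 := fun k => max_lt one_pos (by have : 0 < 2 ^ k * x := by positivity
                                                        linarith)
  have ρz : ρ 0 = r := by simp [hρ, hx, h0]
  have ρm : ∀ k, ρ (k+1) ≤ ρ k := by
    intro k
    apply max_le_max le_rfl
    have : 0 < 2 ^ k * x := by positivity
    rw [pow_succ]; linarith
  have hWr : 0 ≤ ∫ s in r..1, ω s := (moment_le ω hω0 hint r 1 h0 h1.le le_rfl 0).2.2.1
  have hW : ∀ k, (∫ s in (ρ k)..1, ω s) ≤ Cd ^ k * ∫ s in r..1, ω s := by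
    intro k
    induction k with
    | zero => simp [ρz]
    | succ k ih =>
      have h2 : ρ k ≤ (1 + ρ (k+1)) / 2 := by
        apply max_le
        · linarith [ρ0 (k+1)]
        · have : 1 - 2 ^ (k+1) * x ≤ ρ (k+1) := le_max_right _ _
          rw [pow_succ] at this; linarith
      calc _ ≤ Cd * ∫ s in ((1 + ρ (k+1)) / 2)..1, ω s := hdoub _ ⟨ρ0 _, ρ1 _⟩
        _ ≤ Cd * ∫ s in (ρ k)..1, ω s := by
          gcongr
          exact W_anti ω hω0 hint _ _ (ρ0 k) h2 (by linarith [ρ1 (k+1)])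
        _ ≤ Cd * (Cd ^ k * ∫ s in r..1, ω s) := by gcongr
        _ = _ := by ring
  have hpow : ∀ k, ρ k ^ m ≤ (N+1).factorial / (2 ^ k) ^ (N+1) := by
    intro k
    have ha : ρ k ≤ exp (-(2 ^ k * x)) := by
      apply max_le (exp_pos _).le
      have := add_one_le_exp (-(2 ^ k * x))
      linarith
    have hb : ρ k ^ m ≤ exp (-(2:ℝ) ^ k) := by
      calc ρ k ^ m ≤ exp (-(2 ^ k * x)) ^ m := pow_le_pow_left₀ (ρ0 k) ha m
        _ = exp (m * (-(2 ^ k * x))) := by rw [← exp_nat_mul]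
        _ ≤ _ := by
          apply exp_le_exp.2
          have : (2:ℝ) ^ k * 1 ≤ 2 ^ k * (m * x) := by gcongr
          linarith
    have hc := Real.pow_div_factorial_le_exp ((2:ℝ) ^ k) (by positivity) (N+1)
    refine hb.trans ?_
    rw [exp_neg, inv_le_comm₀ (exp_pos _) (by positivity), inv_div]
    exact hc
  have hterm : ∀ k, ρ k ^ m * Cd ^ (k+1) ≤ D * (1/2) ^ k := by
    intro k
    calc ρ k ^ m * Cd ^ (k+1) ≤ ((N+1).factorial / (2 ^ k) ^ (N+1)) * ((2 ^ N) ^ k * Cd) := by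
          rw [pow_succ]
          have := hpow k
          gcongr
      _ = D * (1/2) ^ k := by
        rw [hD, one_div, inv_pow]
        field_simp
        ring
  have key : ∀ k, (∫ s in (ρ k)..1, s ^ m * ω s) ≤
      (1 + 2 * D * (1 - (1/2) ^ k)) * ∫ s in r..1, ω s := by
    intro k
    induction k with
    | zero =>
      have := (moment_le ω hω0 hint r 1 h0 h1.le le_rfl m).2.1
      simpa [ρz] using this
    | succ k ih =>
      obtain ⟨-, hu, hn, hiw, hi⟩ := moment_le ω hω0 hint (ρ (k+1)) (ρ k) (ρ0 _) (ρm k) (ρ1 k).le m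
      obtain ⟨-, -, hn', hiw', hi'⟩ := moment_le ω hω0 hint (ρ k) 1 (ρ0 _) (ρ1 k).le le_rfl m
      rw [← intervalIntegral.integral_add_adjacent_intervals hi hi']
      have hle : (∫ s in ρ (k+1)..ρ k, ω s) ≤ Cd ^ (k+1) * ∫ s in r..1, ω s := by
        refine le_trans ?_ (hW (k+1))
        rw [← intervalIntegral.integral_add_adjacent_intervals hiw hiw']
        linarith
      have h5 : ρ k ^ m * (∫ s in ρ (k+1)..ρ k, ω s) ≤ D * (1/2) ^ k * ∫ s in r..1, ω s := by
        calc _ ≤ ρ k ^ m * (Cd ^ (k+1) * ∫ s in r..1, ω s) :=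
              mul_le_mul_of_nonneg_left hle (pow_nonneg (ρ0 k) _)
          _ = (ρ k ^ m * Cd ^ (k+1)) * ∫ s in r..1, ω s := by ring
          _ ≤ _ := mul_le_mul_of_nonneg_right (hterm k) hWr
      have h6 : (1 + 2 * D * (1 - (1/2) ^ (k+1))) * (∫ s in r..1, ω s) =
        D * (1/2) ^ k * (∫ s in r..1, ω s) + (1 + 2 * D * (1 - (1/2) ^ k)) * ∫ s in r..1, ω s := by
        rw [pow_succ]; ring
      linarith
  obtain ⟨K, hK⟩ := pow_unbounded_of_one_lt (1/x) (one_lt_two)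
  have hρK : ρ K = 0 := by
    apply max_eq_left
    rw [div_lt_iff₀ hx0] at hK
    linarith
  have h7 := key K
  rw [hρK] at h7
  refine h7.trans ?_
  apply mul_le_mul_of_nonneg_right _ hWr
  have : 0 ≤ 2 * D * (1/2:ℝ) ^ K := by positivity
  linarith

/-- abstract layer-cake comparison -/
theorem layer (W : ℝ → ℝ) (δ : ℝ) (hδ : 0 < δ)
    (rn : ℕ → ℝ) (hrn : ∀ n, rn n ∈ Set.Ico (0:ℝ) 1)
    (hanti : ∀ a b, 0 ≤ a → a ≤ b → b ≤ 1 → W b ≤ W a)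
    (hpos : ∀ t, 0 < t → t < 1 → 0 < W t) (hle : ∀ t, 0 < t → t < 1 → W t ≤ 1)
    (hrdef : ∀ n : ℕ, W (rn n) = 2 ^ (-(n:ℝ))) :
    (∑' j : ℕ, ENNReal.ofReal (((2:ℝ) ^ δ) ^ j * (1 - rn (j+1))) = ⊤) ↔
    (∫⁻ t in Set.Ioo (0:ℝ) 1, ENNReal.ofReal (W t ^ (-δ)) = ⊤) := by
  set γ : ℝ := (2:ℝ) ^ δ with hγ
  have hγ1 : 1 < γ := Real.one_lt_rpow (by norm_num) hδ
  have hγ0 : 0 < γ := by linarith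
  set S : ℝ → ENNReal := fun t => ∑' j : ℕ,
    (Set.Ioo (rn (j+1)) 1).indicator (fun _ => ENNReal.ofReal (γ ^ j)) t with hS
  have hSint : ∫⁻ t in Set.Ioo (0:ℝ) 1, S t =
      ∑' j : ℕ, ENNReal.ofReal (γ ^ j * (1 - rn (j+1))) := by
    rw [hS, lintegral_tsum]
    · congr 1
      ext j
      rw [lintegral_indicator measurableSet_Ioo, lintegral_const,
        Measure.restrict_restrict measurableSet_Ioo, Measure.restrict_apply_univ,
        Set.inter_eq_left.2 (Set.Ioo_subset_Ioo (hrn (j+1)).1 le_rfl), Real.volume_Ioo,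
        ENNReal.ofReal_mul (by positivity)]
    · intro j
      exact (measurable_const.indicator measurableSet_Ioo).aemeasurable
  have hn : ∀ t, 0 < t → t < 1 → ∃ n : ℕ, W t ≤ 2 ^ (-(n:ℝ)) ∧ 2 ^ (-((n:ℝ)+1)) < W t := by
    intro t h0 h1
    obtain ⟨n, hn1, hn2⟩ := exists_nat_pow_near (x := (W t)⁻¹) (y := (2:ℝ))
      ((one_le_inv₀ (hpos t h0 h1)).2 (hle t h0 h1)) (by norm_num)
    refine ⟨n, ?_, ?_⟩
    · rw [rpow_neg (by norm_num), rpow_natCast]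
      exact (le_inv_comm₀ (by positivity) (hpos t h0 h1)).1 hn1
    · rw [rpow_neg (by norm_num)]
      have : (2:ℝ) ^ ((n:ℝ)+1) = 2 ^ (n+1) := by exact_mod_cast rpow_natCast (2:ℝ) (n+1)
      rw [this]
      exact (inv_lt_comm₀ (hpos t h0 h1) (by positivity)).1 hn2
  have hlow : ∀ t, 0 < t → t < 1 → ∀ n : ℕ, W t ≤ 2 ^ (-(n:ℝ)) → γ ^ n ≤ W t ^ (-δ) := by
    intro t h0 h1 n h
    have := rpow_le_rpow_of_nonpos (hpos t h0 h1) h (by linarith : -δ ≤ 0)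
    refine le_trans (le_of_eq ?_) this
    rw [← rpow_mul (by norm_num), hγ, ← rpow_natCast, ← rpow_mul (by norm_num)]
    congr 1; ring
  have hup : ∀ t, 0 < t → t < 1 → ∀ n : ℕ, 2 ^ (-((n:ℝ)+1)) < W t → W t ^ (-δ) ≤ γ ^ (n+1) := by
    intro t h0 h1 n h
    have := rpow_le_rpow_of_nonpos (by positivity) h.le (by linarith : -δ ≤ 0)
    refine le_trans this (le_of_eq ?_)
    rw [← rpow_mul (by norm_num), hγ, ← rpow_natCast, ← rpow_mul (by norm_num)]
    congr 1; push_cast; ring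
  have p1 : ∀ t ∈ Set.Ioo (0:ℝ) 1, S t ≤ ENNReal.ofReal (1/(γ-1)) * ENNReal.ofReal (W t ^ (-δ)) := by
    rintro t ⟨h0, h1⟩
    obtain ⟨n, hn1, hn2⟩ := hn t h0 h1
    have hzero : ∀ j ∉ Finset.range n,
        (Set.Ioo (rn (j+1)) 1).indicator (fun _ => ENNReal.ofReal (γ ^ j)) t = 0 := by
      intro j hj
      apply Set.indicator_of_notMem
      rintro ⟨ha, -⟩
      apply hj
      rw [Finset.mem_range]
      have h3 := hanti _ _ (hrn (j+1)).1 ha.le h1.le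
      rw [hrdef] at h3
      have h4 := (rpow_lt_rpow_left_iff (by norm_num : (1:ℝ) < 2)).1 (hn2.trans_le h3)
      push_cast at h4
      have : (j:ℝ) < n := by linarith
      exact_mod_cast this
    have hSt : S t = ∑ j ∈ Finset.range n,
        (Set.Ioo (rn (j+1)) 1).indicator (fun _ => ENNReal.ofReal (γ ^ j)) t :=
      tsum_eq_sum hzero
    rw [hSt]
    calc _ ≤ ∑ j ∈ Finset.range n, ENNReal.ofReal (γ ^ j) :=
          Finset.sum_le_sum fun j _ => Set.indicator_le_self' (fun _ _ => zero_le) t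
      _ = ENNReal.ofReal (∑ j ∈ Finset.range n, γ ^ j) :=
          (ENNReal.ofReal_sum_of_nonneg fun j _ => by positivity).symm
      _ ≤ ENNReal.ofReal (1/(γ-1) * W t ^ (-δ)) := by
          apply ENNReal.ofReal_le_ofReal
          rw [geom_sum_eq hγ1.ne', div_mul_eq_mul_div, one_mul]
          have := hlow t h0 h1 n hn1
          apply div_le_div_of_nonneg_right _ (by linarith)
          linarith
      _ = _ := ENNReal.ofReal_mul (by have : 0 < γ - 1 := by linarith
                                      positivity)
  have p2 : ∀ t ∈ Set.Ioo (0:ℝ) 1, ENNReal.ofReal (W t ^ (-δ)) ≤ ENNReal.ofReal (γ^3) * (1 + S t) := by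
    rintro t ⟨h0, h1⟩
    obtain ⟨n, hn1, hn2⟩ := hn t h0 h1
    have hu := hup t h0 h1 n hn2
    by_cases h2 : n ≤ 1
    · calc _ ≤ ENNReal.ofReal (γ^3) := by
            apply ENNReal.ofReal_le_ofReal
            exact hu.trans (pow_le_pow_right₀ hγ1.le (by omega))
        _ = ENNReal.ofReal (γ^3) * 1 := (mul_one _).symm
        _ ≤ _ := by gcongr; exact le_self_add
    · obtain ⟨k, rfl⟩ : ∃ k, n = k + 2 := ⟨n - 2, by omega⟩
      have hr : rn (k+1) < t := by
        by_contra hcon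
        push Not at hcon
        have h3 := hanti _ _ h0.le hcon (hrn (k+1)).2.le
        rw [hrdef] at h3
        have h4 := (rpow_le_rpow_left_iff (by norm_num : (1:ℝ) < 2)).1 (h3.trans hn1)
        push_cast at h4
        linarith
      calc _ ≤ ENNReal.ofReal (γ^3 * γ^k) := by
            apply ENNReal.ofReal_le_ofReal
            refine hu.trans (le_of_eq ?_)
            ring
        _ = ENNReal.ofReal (γ^3) * ENNReal.ofReal (γ^k) := ENNReal.ofReal_mul (by positivity)
        _ ≤ ENNReal.ofReal (γ^3) * (1 + S t) := by
            gcongr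
            refine le_trans ?_ le_add_self
            refine le_trans (le_of_eq ?_) (ENNReal.le_tsum k)
            rw [Set.indicator_of_mem]
            exact ⟨hr, h1⟩
  rw [← hSint]
  constructor
  · intro h
    have h2 := setLIntegral_mono' (μ := volume) measurableSet_Ioo p1
    rw [h, lintegral_const_mul' _ _ ENNReal.ofReal_ne_top, top_le_iff] at h2
    by_contra hcon
    exact ENNReal.mul_ne_top ENNReal.ofReal_ne_top hcon h2
  · intro h
    have h2 := setLIntegral_mono' (μ := volume) measurableSet_Ioo p2
    rw [h, lintegral_const_mul' _ _ ENNReal.ofReal_ne_top, top_le_iff,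
      lintegral_add_left measurable_const] at h2
    by_contra hcon
    refine ENNReal.mul_ne_top ENNReal.ofReal_ne_top (ENNReal.add_ne_top.2 ⟨?_, hcon⟩) h2
    simp

theorem tsum_top (a b : ℕ → ℝ) (K : ℝ) (hK : 0 ≤ K) (h : ∀ j, a j ≤ K * b j)
    (ha : ∑' j, ENNReal.ofReal (a j) = ⊤) : ∑' j, ENNReal.ofReal (b j) = ⊤ := by
  have h2 : ∑' j, ENNReal.ofReal (a j) ≤ ∑' j, ENNReal.ofReal K * ENNReal.ofReal (b j) := by
    apply ENNReal.tsum_le_tsum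
    intro j
    rw [← ENNReal.ofReal_mul hK]
    exact ENNReal.ofReal_le_ofReal (h j)
  rw [ENNReal.tsum_mul_left, ha, top_le_iff] at h2
  by_contra hcon
  exact ENNReal.mul_ne_top ENNReal.ofReal_ne_top hcon h2

end Aux16

theorem stmt16 (p : ℝ) (hp : 1 < p) (ω : ℝ → ℝ)
    (hω0 : ∀ r ∈ Set.Ico (0:ℝ) 1, 0 ≤ ω r)
    (hint : IntervalIntegrable ω MeasureTheory.volume 0 1)
    (hnorm : (∫ s in (0:ℝ)..1, ω s) = 1)
    (Cd : ℝ) (hdoub : ∀ r ∈ Set.Ico (0:ℝ) 1,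
      (∫ s in r..1, ω s) ≤ Cd * ∫ s in ((1 + r) / 2)..1, ω s)
    (rn : ℕ → ℝ) (hrn : ∀ n, rn n ∈ Set.Ico (0:ℝ) 1)
    (hrdef : ∀ n : ℕ, (∫ s in (rn n)..1, ω s) = 2 ^ (-(n:ℝ)))
    (M : ℕ → ℕ) (hM : ∀ n, M n = Nat.floor (1 / (1 - rn n))) :
    (∑' j : ℕ, ENNReal.ofReal
        ((2:ℝ) ^ (-(j:ℝ)) /
          ((∫ s in (0:ℝ)..1, s ^ (2 * M j + 1) * ω s) ^ (p / (p - 1)) * (M (j + 1) : ℝ)))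
      = ⊤) ↔
    (∫⁻ t in Set.Ioo (0:ℝ) 1,
        ENNReal.ofReal ((∫ s in t..1, ω s) ^ ((1:ℝ) - p / (p - 1))) = ⊤) := by
  set q := p / (p - 1) with hq
  have hq1 : 1 < q := by
    rw [hq, lt_div_iff₀ (by linarith)]; linarith
  have hanti := Aux16.W_anti ω hω0 hint
  have hnn : ∀ t, 0 ≤ t → t ≤ 1 → 0 ≤ ∫ s in t..1, ω s := fun t h0 h1 =>
    (Aux16.moment_le ω hω0 hint t 1 h0 h1 le_rfl 0).2.2.1
  have hC : 1 ≤ Cd := by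
    have h1 := hdoub 0 ⟨le_rfl, one_pos⟩
    rw [hnorm] at h1
    have h2 := hanti 0 ((1+0)/2) le_rfl (by norm_num) (by norm_num)
    rw [hnorm] at h2
    have h3 := hnn ((1+0)/2) (by norm_num) (by norm_num)
    by_contra hcon
    push Not at hcon
    rcases h3.eq_or_lt with h4 | h4
    · rw [← h4] at h1
      norm_num at h1
    · have := mul_lt_mul_of_pos_right hcon h4
      linarith
  have hC0 : 0 < Cd := by linarith
  have hWpos : ∀ t, 0 < t → t < 1 → 0 < ∫ s in t..1, ω s := by
    have hk : ∀ k : ℕ, 0 < ∫ s in (1 - (1/2:ℝ)^k)..1, ω s := by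
      intro k
      induction k with
      | zero => simp [hnorm]
      | succ k ih =>
        have e1 : (1/2:ℝ)^k ≤ 1 := pow_le_one₀ (by norm_num) (by norm_num)
        have e2 : 0 < (1/2:ℝ)^k := by positivity
        have := hdoub (1 - (1/2:ℝ)^k) ⟨by linarith, by linarith⟩
        have e3 : (1 + (1 - (1/2:ℝ)^k)) / 2 = 1 - (1/2:ℝ)^(k+1) := by rw [pow_succ]; ring
        rw [e3] at this
        exact pos_of_mul_pos_right (ih.trans_le this) hC0.le
    intro t h0 h1
    obtain ⟨k, hk2⟩ := exists_pow_lt_of_lt_one (by linarith : 0 < 1 - t) (by norm_num : (1/2:ℝ) < 1)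
    refine (hk k).trans_le (hanti t _ h0.le (by linarith) ?_)
    have e2 : 0 < (1/2:ℝ)^k := by positivity
    linarith
  have hlay := Aux16.layer (fun t => ∫ s in t..1, ω s) (q - 1) (by linarith) rn hrn hanti hWpos
    (fun t h0 h1 => (hanti 0 t le_rfl h0.le h1.le).trans hnorm.le) hrdef
  have e : -(q - 1) = 1 - q := by ring
  rw [e] at hlay
  rw [← hlay]
  obtain ⟨N, hN⟩ := pow_unbounded_of_one_lt Cd (one_lt_two)
  set A : ℝ := 1 + 2 * (Cd * (N+1).factorial) with hA
  have hA0 : 0 < A := by positivity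
  have hx : ∀ n, 0 < 1 - rn n := fun n => by linarith [(hrn n).2]
  have hMle : ∀ n, (M n : ℝ) * (1 - rn n) ≤ 1 := by
    intro n
    have : (M n : ℝ) ≤ 1 / (1 - rn n) := by
      rw [hM]; exact Nat.floor_le (by have := hx n; positivity)
    rwa [le_div_iff₀ (hx n)] at this
  have hMgt : ∀ n, 1 < ((M n : ℝ) + 1) * (1 - rn n) := by
    intro n
    have : 1 / (1 - rn n) < (M n : ℝ) + 1 := by
      rw [hM]; exact Nat.lt_floor_add_one _
    rwa [div_lt_iff₀ (hx n)] at this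
  have hM1 : ∀ n, (1:ℝ) ≤ M n := by
    intro n
    have : 1 ≤ M n := by
      rw [hM]
      apply Nat.le_floor
      rw [Nat.cast_one, le_div_iff₀ (hx n)]
      linarith [(hrn n).1]
    exact_mod_cast this
  set I : ℕ → ℝ := fun j => ∫ s in (0:ℝ)..1, s ^ (2 * M j + 1) * ω s with hI
  have hlow : ∀ j : ℕ, 2 ^ (-(j:ℝ)) / (8 * Cd) ≤ I j := by
    intro j
    have := Aux16.moment_lower ω hω0 hint Cd hC0 hdoub (rn j) (hrn j) (M j) (hMle j)
    rwa [hrdef] at this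
  have hupp : ∀ j : ℕ, I j ≤ A * 2 ^ (-(j:ℝ)) := by
    intro j
    have := Aux16.moment_upper ω hω0 hint Cd hC hdoub N hN.le (rn j) (hrn j) (2 * M j + 1) (by
      push_cast
      nlinarith [hMgt j, hM1 j, hx j])
    rwa [hrdef] at this
  have hIpos : ∀ j, 0 < I j := fun j => lt_of_lt_of_le (by positivity) (hlow j)
  -- 2^{-j} = γ^j (2^{-j})^q
  have hid : ∀ j : ℕ, (2:ℝ) ^ (-(j:ℝ)) = ((2:ℝ) ^ (q-1)) ^ j * ((2:ℝ) ^ (-(j:ℝ))) ^ q := by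
    intro j
    rw [← rpow_natCast, ← rpow_mul (by norm_num), ← rpow_mul (by norm_num),
      ← rpow_add (by norm_num)]
    congr 1; ring
  have hu0 : ∀ j : ℕ, (0:ℝ) < 2 ^ (-(j:ℝ)) := fun j => by positivity
  constructor
  · apply Aux16.tsum_top _ _ ((8 * Cd) ^ q * 2) (by positivity)
    intro j
    have h1 : (2 ^ (-(j:ℝ))) ^ q ≤ (8 * Cd) ^ q * I j ^ q := by
      rw [← mul_rpow (by positivity) (hIpos j).le]
      apply rpow_le_rpow (hu0 j).le _ (by linarith)
      have := hlow j
      rw [div_le_iff₀ (by positivity)] at this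
      linarith
    have h2 : 1 ≤ 2 * (1 - rn (j+1)) * M (j+1) := by
      nlinarith [hMgt (j+1), hM1 (j+1), hx (j+1)]
    have hIq : 0 < I j ^ q := rpow_pos_of_pos (hIpos j) q
    have hMp : (0:ℝ) < M (j+1) := by linarith [hM1 (j+1)]
    rw [div_le_iff₀ (by positivity)]
    calc (2:ℝ) ^ (-(j:ℝ)) = ((2:ℝ) ^ (q-1)) ^ j * ((2:ℝ) ^ (-(j:ℝ))) ^ q * 1 := by
          rw [mul_one]; exact hid j
      _ ≤ ((2:ℝ) ^ (q-1)) ^ j * ((8 * Cd) ^ q * I j ^ q) * (2 * (1 - rn (j+1)) * M (j+1)) := by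
          gcongr
      _ = _ := by ring
  · apply Aux16.tsum_top _ _ (A ^ q) (by positivity)
    intro j
    have h1 : I j ^ q ≤ A ^ q * (2 ^ (-(j:ℝ))) ^ q := by
      rw [← mul_rpow hA0.le (hu0 j).le]
      exact rpow_le_rpow (hIpos j).le (hupp j) (by linarith)
    have hIq : 0 < I j ^ q := rpow_pos_of_pos (hIpos j) q
    have hMp : (0:ℝ) < M (j+1) := by linarith [hM1 (j+1)]
    have hx' := hx (j+1)
    rw [← mul_div_assoc, le_div_iff₀ (by positivity)]
    calc ((2:ℝ) ^ (q-1)) ^ j * (1 - rn (j+1)) * (I j ^ q * M (j+1))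
        = ((2:ℝ) ^ (q-1)) ^ j * (I j ^ q) * (M (j+1) * (1 - rn (j+1))) := by ring
      _ ≤ ((2:ℝ) ^ (q-1)) ^ j * (A ^ q * (2 ^ (-(j:ℝ))) ^ q) * 1 := by
          have := hMle (j+1)
          gcongr
      _ = A ^ q * (((2:ℝ) ^ (q-1)) ^ j * ((2:ℝ) ^ (-(j:ℝ))) ^ q) := by ring
      _ = _ := by rw [← hid j]
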